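/- Let n ∈ ℕ and let F : ℝⁿ → ℝⁿ be continuous and piecewise linear and coherently oriented: there is a finite nonempty family of affine maps F_i(x) = A_i·x + b_i whose linear parts A_i are all invertible with determinants of the same sign, such that for every x ∈ ℝⁿ, F(x) = F_i(x) for some i. Call y ∈ ℝⁿ a regular value of F if at every point x with F(x) = y the map F is Fréchet differentiable with invertible derivative. If every regular value of F has exactly one preimage under F, then F is bijective (and hence, being a continuous open bijection, a homeomorphism of ℝⁿ). -/

import Mathlib

/-!
Surjectivity is immediate: a value with no preimage is vacuously regular.

Injectivity follows from the global estimate `‖x' - x‖ ≤ C * ‖F x' - F x‖`, where `C` bounds the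
inverses of all the linear parts `A i`. By continuity it suffices to prove it for `x` and `x'` in
suitable dense sets. Starting from `x`, the segment from `F x` to `F x'` is lifted through `F` along
a path of speed at most `C` times that of the segment (`norm_sub_le_of_segment`). The lift ends at a
preimage of `F x'`; if `F x'` is a regular value that preimage is `x'` itself, and the estimate
follows.

The lift can be continued past a point `z` as soon as all the pieces active at `z` agree on one
common hyperplane (`exists_local_lift`). Then `F` is affine on each of the two sides of it near `z`,
and because the two determinants have the same sign, at least one of the two candidate directions
`(A i)⁻¹ v` points into the side where it is valid (`det_rank_one_sign`).

It remains to choose `x` and `x'` so that the segment avoids the values at all other points, which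
lie in finitely many affine subspaces of codimension at least two. For fixed `F x` the endpoints of
bad segments lie in the span of `F x` and such a subspace, which is still proper (`thin_cone`), and
the preimage under `F` of finitely many proper affine subspaces has measure zero
(`dense_preimage_compl_thin`). Regularity of `F x'` is generic for the same reason (`thin_image`).
-/

open Set Filter Topology Module

section Helpers

variable {E : Type*} [NormedAddCommGroup E] [NormedSpace ℝ E]

/-- Let `P` and `Q` have determinants of the same sign and agree on the hyperplane `ℓ = 0`. Then
preimages of a vector under `P` and `Q` cannot lie strictly on opposite sides of the hyperplane:
`P` is `Q` composed with the transvection `u ↦ u + ℓ u • c`, whose determinant `1 + ℓ c` is the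
factor by which `ℓ` gets multiplied. -/
theorem det_rank_one_sign [FiniteDimensional ℝ E] (P Q : E →L[ℝ] E) (ℓ : E →ₗ[ℝ] ℝ)
    (hPQ : 0 < LinearMap.det P.toLinearMap * LinearMap.det Q.toLinearMap)
    (hker : ∀ u, ℓ u = 0 → P u = Q u) {p q : E} (hpq : P p = Q q) (hp : ℓ p < 0) :
    ℓ q < 0 := by
  have hQ : IsUnit (LinearMap.det Q.toLinearMap) :=
    isUnit_iff_ne_zero.2 fun h => by simp [h] at hPQ
  have hbij : Function.Bijective Q :=
    (End.isUnit_iff _).1 ((LinearMap.isUnit_iff_isUnit_det Q.toLinearMap).2 hQ)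
  -- Any `e` with `ℓ e = 1` would do for decomposing `u = (u - ℓ u • e) + ℓ u • e`.
  set e : E := (ℓ p)⁻¹ • p with he
  have hle : ℓ e = 1 := by simp [he, hp.ne]
  obtain ⟨c, hc⟩ := hbij.2 (P e - Q e)
  have hdec : P.toLinearMap = Q.toLinearMap ∘ₗ LinearMap.transvection ℓ c := by
    ext u
    have h := hker (u - ℓ u • e) (by simp [hle])
    simp only [map_sub, map_smul] at h
    simp only [ContinuousLinearMap.coe_coe, LinearMap.comp_apply, LinearMap.transvection.apply,
      map_add, map_smul, hc, smul_sub]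
    rw [sub_eq_iff_eq_add] at h
    rw [h]; abel
  have hd : 0 < 1 + ℓ c := by
    rw [hdec, LinearMap.det_comp, LinearMap.transvection.det] at hPQ
    nlinarith [sq_nonneg (LinearMap.det Q.toLinearMap)]
  have hq : q = p + ℓ p • c := by
    apply hbij.1
    have := congrArg (fun f : E →ₗ[ℝ] E => f p) hdec
    simp only [ContinuousLinearMap.coe_coe, LinearMap.comp_apply,
      LinearMap.transvection.apply] at this
    rw [← hpq, this]
  rw [hq]
  simp only [map_add, map_smul, smul_eq_mul]
  nlinarith

/-- Near `z`, a continuous selection uses only pieces that are active at `z`. -/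
theorem eventually_active {ι : Type*} [Finite ι] {F : E → E} (hF : Continuous F)
    {A : ι → E →L[ℝ] E} {b : ι → E} (hsel : ∀ x, ∃ i, F x = A i x + b i) (z : E) :
    ∃ ε > 0, ∀ u, ‖u‖ < ε → ∃ i, F z = A i z + b i ∧ F (z + u) - F z = A i u := by
  have h : ∀ᶠ x in 𝓝 z, ∀ i, F z ≠ A i z + b i → F x ≠ A i x + b i := by
    rw [eventually_all]
    intro i
    by_cases hi : F z = A i z + b i
    · simp [hi]
    · have : ∀ᶠ x in 𝓝 z, F x ≠ A i x + b i :=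
        (isOpen_ne_fun hF (by fun_prop : Continuous fun x => A i x + b i)).mem_nhds hi
      exact this.mono fun x hx _ => hx
  obtain ⟨ε, hε, h⟩ := Metric.eventually_nhds_iff.1 h
  refine ⟨ε, hε, fun u hu => ?_⟩
  obtain ⟨i, hi⟩ := hsel (z + u)
  have hz : F z = A i z + b i := by
    by_contra hne
    exact h (by simpa [dist_eq_norm] using hu) i hne hi
  exact ⟨i, hz, by rw [hi, hz, map_add]; abel⟩

/-- A continuous selection of linear maps that all agree on the hyperplane `ℓ = 0` follows a single
one of them on a half ball: two of them that differ do so at every point with `0 < ℓ u`, so a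
switch between them would contradict connectedness. -/
theorem exists_eqOn_halfBall {ι : Type*} [Finite ι] {G : E → E} (hG : Continuous G)
    {A : ι → E →L[ℝ] E} {S : Set ι} {ε : ℝ} (hε : 0 < ε)
    (hsel : ∀ u, ‖u‖ < ε → ∃ i ∈ S, G u = A i u)
    {ℓ : E →L[ℝ] ℝ} (hℓ : ℓ ≠ 0)
    (hker : ∀ i ∈ S, ∀ j ∈ S, ∀ u, ℓ u = 0 → A i u = A j u) :
    ∃ i ∈ S, ∀ u, ‖u‖ < ε → 0 ≤ ℓ u → G u = A i u := by
  obtain ⟨e, he⟩ : ∃ e, ℓ e = 1 := by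
    obtain ⟨w, hw⟩ : ∃ w, ℓ w ≠ 0 := by
      by_contra! h
      exact hℓ (ContinuousLinearMap.ext h)
    exact ⟨(ℓ w)⁻¹ • w, by simp [hw]⟩
  let B : Set E := Metric.ball 0 ε ∩ {u | 0 < ℓ u}
  have hB : IsPreconnected B :=
    ((convex_ball 0 ε).inter (convex_halfSpace_gt ℓ.isLinear 0)).isPreconnected
  have he0 : 0 < ‖e‖ := norm_pos_iff.2 fun h => by simp [h] at he
  let u₀ : E := (ε / (2 * ‖e‖)) • e
  have hu₀ : u₀ ∈ B := by
    refine ⟨?_, ?_⟩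
    · simp only [u₀, Metric.mem_ball, dist_zero_right, norm_smul, Real.norm_eq_abs]
      rw [abs_of_pos (by positivity)]
      field_simp
      linarith
    · simp only [u₀, mem_ofPred_eq, map_smul, he, smul_eq_mul, mul_one]
      positivity
  obtain ⟨i, hiS, hi⟩ := hsel u₀ (by simpa using hu₀.1)
  -- The normalised deviation of `G` from `A i` takes finitely many values on the half ball.
  let c : E → E := fun u => (ℓ u)⁻¹ • (G u - A i u)
  have hc : ContinuousOn c B := by
    refine ContinuousOn.smul (ContinuousOn.inv₀ (by fun_prop) fun u hu => hu.2.ne') (by fun_prop)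
  have hmaps : MapsTo c B (range fun j => A j e - A i e) := by
    intro u hu
    obtain ⟨j, hjS, hj⟩ := hsel u (by simpa using hu.1)
    refine ⟨j, ?_⟩
    have h := hker j hjS i hiS (u - ℓ u • e) (by simp [he])
    simp only [map_sub, map_smul] at h
    have h' : G u - A i u = ℓ u • (A j e - A i e) := by
      rw [hj, smul_sub, ← sub_eq_zero]
      rw [← sub_eq_zero] at h
      rw [← h]; abel
    have hpos : 0 < ℓ u := hu.2
    simp only [c, h', smul_smul, inv_mul_cancel₀ hpos.ne', one_smul]
  have hconst : ∀ u ∈ B, c u = 0 := by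
    intro u hu
    have h0 : c u₀ = 0 := by simp [c, hi]
    rw [← h0]
    exact hB.constant_of_mapsTo (finite_range _).isDiscrete hc hmaps hu hu₀
  refine ⟨i, hiS, fun u hu hℓu => ?_⟩
  rcases hℓu.eq_or_lt with h | h
  · obtain ⟨j, hjS, hj⟩ := hsel u hu
    rw [hj, hker j hjS i hiS u h.symm]
  · have := hconst u ⟨by simpa using hu, h⟩
    simpa [c, h.ne', sub_eq_zero] using this

/-- A subset of a proper affine subspace. -/
def Thin (s : Set E) : Prop := ∃ (a : E) (K : Submodule ℝ E), K ≠ ⊤ ∧ ∀ y ∈ s, y - a ∈ K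

/-- The image under `P · + b` of the locus where it agrees with `Q · + c`. -/
theorem thin_image {P Q : E →L[ℝ] E} (hP : Function.Bijective P) (hPQ : P ≠ Q) (b c : E) :
    Thin {y | ∃ z, P z + b = Q z + c ∧ y = P z + b} := by
  by_cases h : ∃ z₀, P z₀ + b = Q z₀ + c
  · obtain ⟨z₀, h₀⟩ := h
    refine ⟨P z₀ + b, (LinearMap.ker (P - Q).toLinearMap).map P.toLinearMap, ?_, ?_⟩
    · intro h
      apply hPQ
      ext u
      have hu : P u ∈ (LinearMap.ker (P - Q).toLinearMap).map P.toLinearMap := by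
        rw [h]; trivial
      obtain ⟨w, hw, hwu⟩ := hu
      obtain rfl : w = u := hP.1 hwu
      simpa [sub_eq_zero] using hw
    · rintro _ ⟨z, hz, rfl⟩
      refine ⟨z - z₀, ?_, by simp⟩
      have e1 : Q z = P z + b - c := by rw [hz]; abel
      have e2 : Q z₀ = P z₀ + b - c := by rw [h₀]; abel
      simp [e1, e2]
  · refine ⟨0, LinearMap.ker (P - Q).toLinearMap, ?_, ?_⟩
    · intro h
      rw [LinearMap.ker_eq_top] at h
      apply hPQ
      ext u
      simpa [sub_eq_zero] using congrArg (fun f : E →ₗ[ℝ] E => f u) h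
    · rintro _ ⟨z, hz, rfl⟩
      exact (h ⟨z, hz⟩).elim

variable [FiniteDimensional ℝ E]

theorem bijective_of_det {P : E →L[ℝ] E} (h : LinearMap.det P.toLinearMap ≠ 0) :
    Function.Bijective P :=
  (End.isUnit_iff _).1 ((LinearMap.isUnit_iff_isUnit_det P.toLinearMap).2 h.isUnit)

/-- A ray `F z + s • v` lifts through `F` for small `s`, along a ray on which `F` follows one piece,
provided the kernels of differences of distinct active linear parts meet pairwise in codimension at
most one. Such kernels are then all the same hyperplane. -/
theorem exists_local_lift {ι : Type*} [Finite ι] {F : E → E} (hF : Continuous F)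
    {A : ι → E →L[ℝ] E} {b : ι → E} (hsel : ∀ x, ∃ i, F x = A i x + b i)
    (hdet : ∀ i j, 0 < LinearMap.det (A i).toLinearMap * LinearMap.det (A j).toLinearMap)
    (z v : E)
    (hrank : ∀ i j k l, A i ≠ A j → A k ≠ A l →
      F z = A i z + b i → F z = A j z + b j → F z = A k z + b k → F z = A l z + b l →
      finrank ℝ E ≤ finrank ℝ
        ↥(LinearMap.ker (A i - A j).toLinearMap ⊓ LinearMap.ker (A k - A l).toLinearMap) + 1) :
    ∃ i u, A i u = v ∧ ∃ δ > (0 : ℝ), ∀ s : ℝ, 0 < s → s < δ → F (z + s • u) = F z + s • v := by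
  obtain ⟨ε, hε, hact⟩ := eventually_active hF hsel z
  have hbij : ∀ i, Function.Bijective (A i) := fun i =>
    bijective_of_det fun h => by simpa [h] using hdet i i
  have key : ∀ i u, A i u = v → (∀ s : ℝ, 0 < s → ‖s • u‖ < ε → F (z + s • u) - F z = A i (s • u)) →
      ∃ i u, A i u = v ∧ ∃ δ > (0 : ℝ), ∀ s : ℝ, 0 < s → s < δ → F (z + s • u) = F z + s • v := by
    intro i u hu h
    refine ⟨i, u, hu, ε / (‖u‖ + 1), by positivity, fun s hs hsδ => ?_⟩
    have hsu : ‖s • u‖ < ε := by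
      rw [norm_smul, Real.norm_of_nonneg hs.le]
      rw [lt_div_iff₀ (by positivity)] at hsδ
      nlinarith [norm_nonneg u]
    have := h s hs hsu
    rw [map_smul, hu, sub_eq_iff_eq_add'] at this
    exact this
  let S : Set ι := {i | F z = A i z + b i}
  by_cases hS : ∀ i ∈ S, ∀ j ∈ S, A i = A j
  · obtain ⟨i, hi⟩ := hsel z
    obtain ⟨u, hu⟩ := (hbij i).2 v
    refine key i u hu fun s _ hs => ?_
    obtain ⟨j, hj, hju⟩ := hact _ hs
    rw [hju, hS j hj i hi]
  push Not at hS
  obtain ⟨i₀, hi₀, j₀, hj₀, hne⟩ := hS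
  have hlt : LinearMap.ker (A i₀ - A j₀).toLinearMap < ⊤ := by
    rw [lt_top_iff_ne_top]
    intro h
    rw [LinearMap.ker_eq_top] at h
    apply hne
    ext u
    simpa [sub_eq_zero] using congrArg (fun f : E →ₗ[ℝ] E => f u) h
  obtain ⟨ℓ, hℓ, hle⟩ := Submodule.exists_le_ker_of_lt_top _ hlt
  -- All active linear parts agree on the hyperplane `ker ℓ`, by counting dimensions.
  have hker : ∀ i ∈ S, ∀ j ∈ S, ∀ u, ℓ u = 0 → A i u = A j u := by
    intro i hi j hj u hu
    by_cases hij : A i = A j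
    · rw [hij]
    have h1 := hrank i j i₀ j₀ hij hne hi hj hi₀ hj₀
    have h2 : finrank ℝ (LinearMap.ker ℓ) < finrank ℝ E :=
      Submodule.finrank_lt (by rwa [Ne, LinearMap.ker_eq_top])
    have h3 := Submodule.eq_of_le_of_finrank_le (inf_le_right.trans hle) (by omega :
      finrank ℝ (LinearMap.ker ℓ) ≤ finrank ℝ
        ↥(LinearMap.ker (A i - A j).toLinearMap ⊓ LinearMap.ker (A i₀ - A j₀).toLinearMap))
    have h4 : u ∈ LinearMap.ker ℓ := hu
    rw [← h3] at h4
    simpa [sub_eq_zero] using h4.1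
  let L : E →L[ℝ] ℝ := LinearMap.toContinuousLinearMap ℓ
  have hL : ∀ u, L u = ℓ u := fun u => rfl
  have hL0 : L ≠ 0 := fun h => hℓ (LinearMap.ext fun u => by rw [← hL, h]; rfl)
  have hG : Continuous fun u => F (z + u) - F z := by fun_prop
  obtain ⟨p, hpS, hp⟩ := exists_eqOn_halfBall hG (S := S) hε hact hL0 hker
  obtain ⟨m, hmS, hm⟩ := exists_eqOn_halfBall hG (S := S) hε hact (neg_ne_zero.2 hL0)
    fun i hi j hj u hu => hker i hi j hj u (by simpa [hL] using hu)
  obtain ⟨up, hup⟩ := (hbij p).2 v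
  obtain ⟨um, hum⟩ := (hbij m).2 v
  -- `A p` governs the side `0 ≤ ℓ` and `A m` the side `ℓ ≤ 0`.
  by_cases hsp : 0 ≤ ℓ up
  · refine key p up hup fun s hs hsu => hp _ hsu ?_
    rw [hL, map_smul]
    exact mul_nonneg hs.le hsp
  · have : ℓ um < 0 := det_rank_one_sign (A p) (A m) ℓ (hdet p m) (hker p hpS m hmS)
      (hup.trans hum.symm) (not_le.1 hsp)
    refine key m um hum fun s hs hsu => hm _ hsu ?_
    simp only [map_smul, hL, neg_apply, smul_eq_mul]
    nlinarith

/-- The segment from `F x` to `F x + v` lifts to a path starting at `x`, if `exists_local_lift`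
applies over each of its points except possibly the last. The set `T` below consists of the times
that can be reached at speed at most `C * ‖v‖`; it is closed by compactness and extends to the right
by local lifting, so no path needs to be constructed. -/
theorem norm_sub_le_of_segment {ι : Type*} [Finite ι] {F : E → E} (hF : Continuous F)
    {A : ι → E →L[ℝ] E} {b : ι → E} (hsel : ∀ x, ∃ i, F x = A i x + b i)
    (hdet : ∀ i j, 0 < LinearMap.det (A i).toLinearMap * LinearMap.det (A j).toLinearMap)
    {C : ℝ} (hC : ∀ i u, ‖u‖ ≤ C * ‖A i u‖) (x v : E)
    (hrank : ∀ t : ℝ, 0 ≤ t → t < 1 → ∀ z, F z = F x + t • v → ∀ i j k l, A i ≠ A j → A k ≠ A l →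
      F z = A i z + b i → F z = A j z + b j → F z = A k z + b k → F z = A l z + b l →
      finrank ℝ E ≤ finrank ℝ
        ↥(LinearMap.ker (A i - A j).toLinearMap ⊓ LinearMap.ker (A k - A l).toLinearMap) + 1) :
    ∃ z, F z = F x + v ∧ ‖z - x‖ ≤ C * ‖v‖ := by
  let T : Set ℝ := {t | ∃ z, F z = F x + t • v ∧ ‖z - x‖ ≤ C * (t * ‖v‖)}
  obtain ⟨i₀, -⟩ := hsel x
  have hCv : 0 ≤ C * ‖v‖ := by
    obtain ⟨w, hw⟩ := (bijective_of_det (P := A i₀) fun h => by simpa [h] using hdet i₀ i₀).2 v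
    simpa [hw] using (norm_nonneg w).trans (hC i₀ w)
  have hclosed : IsClosed (T ∩ Icc 0 1) := by
    let D : Set (ℝ × E) := {q | F q.2 = F x + q.1 • v ∧ ‖q.2 - x‖ ≤ C * (q.1 * ‖v‖)}
    have hD : IsClosed D :=
      (isClosed_eq (f := fun q : ℝ × E => F q.2) (g := fun q => F x + q.1 • v)
        (by fun_prop) (by fun_prop)).inter
        (isClosed_le (f := fun q : ℝ × E => ‖q.2 - x‖) (g := fun q => C * (q.1 * ‖v‖))
          (by fun_prop) (by fun_prop))
    have hK : IsCompact (D ∩ Icc (0 : ℝ) 1 ×ˢ Metric.closedBall x (C * ‖v‖)) :=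
      (isCompact_Icc.prod (isCompact_closedBall _ _)).inter_left hD
    convert (hK.image continuous_fst).isClosed using 1
    ext t
    constructor
    · rintro ⟨⟨z, hz, hzx⟩, ht⟩
      refine ⟨(t, z), ⟨⟨hz, hzx⟩, ht, ?_⟩, rfl⟩
      rw [Metric.mem_closedBall, dist_eq_norm]
      nlinarith [ht.2]
    · rintro ⟨⟨t, z⟩, ⟨⟨hz, hzx⟩, ht, -⟩, rfl⟩
      exact ⟨⟨z, hz, hzx⟩, ht⟩
  have h0 : (0 : ℝ) ∈ T := ⟨x, by simp⟩
  have hsub : Icc (0 : ℝ) 1 ⊆ T := by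
    refine hclosed.Icc_subset_of_forall_exists_gt h0 ?_
    rintro t ⟨⟨z, hz, hzx⟩, ht0, ht1⟩ y hy
    obtain ⟨i, u, hu, δ, hδ, hlift⟩ :=
      exists_local_lift hF hsel hdet z v (hrank t ht0 ht1 z hz)
    have hy' : 0 < y - t := sub_pos.2 hy
    let s := min (δ / 2) (y - t)
    have hs : 0 < s := lt_min (half_pos hδ) hy'
    have hs2 : s < δ := (min_le_left _ _).trans_lt (half_lt_self hδ)
    refine ⟨t + s, ⟨z + s • u, ?_, ?_⟩, by linarith, by linarith [min_le_right (δ / 2) (y - t)]⟩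
    · rw [hlift s hs hs2, hz, add_smul, add_assoc]
    · have h1 := hC i u
      rw [hu] at h1
      calc ‖z + s • u - x‖ = ‖(z - x) + s • u‖ := by congr 1; abel
        _ ≤ ‖z - x‖ + s * ‖u‖ := by
          refine (norm_add_le _ _).trans_eq ?_
          rw [norm_smul, Real.norm_of_nonneg hs.le]
        _ ≤ C * (t * ‖v‖) + s * (C * ‖v‖) := by gcongr
        _ = C * ((t + s) * ‖v‖) := by ring
  obtain ⟨z, hz, hzx⟩ := hsub (right_mem_Icc.2 zero_le_one)
  exact ⟨z, by simpa using hz, by simpa using hzx⟩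

/-- The preimage of finitely many thin sets is null, since it is covered by their preimages under the
finitely many invertible affine pieces. -/
theorem dense_preimage_compl_thin {ι κ : Type*} [Finite ι] [Finite κ] {F : E → E}
    {A : ι → E →L[ℝ] E} {b : ι → E} (hsel : ∀ x, ∃ i, F x = A i x + b i)
    (hbij : ∀ i, Function.Bijective (A i)) {s : κ → Set E} (hs : ∀ q, Thin (s q)) :
    Dense {x | ∀ q, F x ∉ s q} := by
  borelize E
  have : ∀ᵐ x ∂(MeasureTheory.Measure.addHaar : MeasureTheory.Measure E),
      ∀ q i, A i x + b i ∉ s q := by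
    rw [MeasureTheory.ae_all_iff]
    intro q
    rw [MeasureTheory.ae_all_iff]
    intro i
    obtain ⟨a, K, hK, hsK⟩ := hs q
    obtain ⟨x₀, hx₀⟩ := (hbij i).2 (a - b i)
    have hne : AffineSubspace.mk' x₀ (K.comap (A i).toLinearMap) ≠ ⊤ := by
      intro h
      apply hK
      have h2 := congrArg AffineSubspace.direction h
      rw [AffineSubspace.direction_mk', AffineSubspace.direction_top] at h2
      rw [eq_top_iff]
      intro y _
      obtain ⟨x, rfl⟩ := (hbij i).2 y
      have : x ∈ K.comap (A i).toLinearMap := by rw [h2]; trivial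
      exact this
    have h0 := MeasureTheory.Measure.addHaar_affineSubspace
      (MeasureTheory.Measure.addHaar : MeasureTheory.Measure E) _ hne
    rw [MeasureTheory.ae_iff]
    refine MeasureTheory.measure_mono_null (fun x hx => ?_) h0
    simp only [not_not, mem_ofPred_eq] at hx
    have h3 := hsK _ hx
    simp only [SetLike.mem_coe, AffineSubspace.mem_mk', vsub_eq_sub, Submodule.mem_comap,
      ContinuousLinearMap.coe_coe, map_sub, hx₀]
    convert h3 using 1
    abel
  refine (MeasureTheory.Measure.dense_of_ae this).mono fun x hx q => ?_
  obtain ⟨i, hi⟩ := hsel x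
  rw [hi]
  exact hx q i

/-- The cone with apex `y` over the image of an agreement locus of codimension at least two. -/
theorem thin_cone {P Q R S : E →L[ℝ] E} (b c d e y : E)
    (hrank : finrank ℝ ↥(LinearMap.ker (P - Q).toLinearMap ⊓ LinearMap.ker (R - S).toLinearMap) + 1
      < finrank ℝ E) :
    Thin {w | ∃ (t : ℝ) (z : E), P z + b = Q z + c ∧ R z + d = S z + e ∧
      w = y + t • (P z + b - y)} := by
  let K := LinearMap.ker (P - Q).toLinearMap ⊓ LinearMap.ker (R - S).toLinearMap
  have hproper : ∀ a : E, K.map P.toLinearMap ⊔ Submodule.span ℝ {a} ≠ ⊤ := by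
    intro a h
    have h1 := Submodule.finrank_add_le_finrank_add_finrank (K.map P.toLinearMap)
      (Submodule.span ℝ {a})
    have h2 := Submodule.finrank_map_le P.toLinearMap K
    have h3 := finrank_span_le_card (R := ℝ) ({a} : Set E)
    rw [toFinset_singleton, Finset.card_singleton] at h3
    rw [h, finrank_top] at h1
    change finrank ℝ K + 1 < _ at hrank
    omega
  by_cases h : ∃ z₀, P z₀ + b = Q z₀ + c ∧ R z₀ + d = S z₀ + e
  · obtain ⟨z₀, h₀, h₀'⟩ := h
    refine ⟨y, _, hproper (P z₀ + b - y), ?_⟩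
    rintro _ ⟨t, z, hz, hz', rfl⟩
    have e1 : Q z = P z + b - c := by rw [hz]; abel
    have e2 : Q z₀ = P z₀ + b - c := by rw [h₀]; abel
    have e3 : S z = R z + d - e := by rw [hz']; abel
    have e4 : S z₀ = R z₀ + d - e := by rw [h₀']; abel
    have hk : P (z - z₀) ∈ K.map P.toLinearMap :=
      ⟨z - z₀, ⟨by simp [e1, e2], by simp [e3, e4]⟩, rfl⟩
    have : y + t • (P z + b - y) - y = t • (P (z - z₀) + (P z₀ + b - y)) := by
      rw [map_sub]; module
    rw [this]
    exact Submodule.smul_mem _ _ (Submodule.add_mem_sup hk (Submodule.mem_span_singleton_self _))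
  · refine ⟨0, _, hproper 0, ?_⟩
    rintro _ ⟨t, z, hz, hz', rfl⟩
    exact (h ⟨z, hz, hz'⟩).elim

end Helpers

/-- Nontrivial direction of Lemma 4.2 of the paper, stated degree-freely: a
continuous, piecewise linear, coherently oriented map `F : ℝⁿ → ℝⁿ` such that
every regular value has exactly one preimage is bijective (and hence a
homeomorphism, being a continuous open bijection). -/
theorem bijective_of_coherently_oriented_degree_one
    (n : ℕ) (F : EuclideanSpace ℝ (Fin n) → EuclideanSpace ℝ (Fin n))
    (hF : Continuous F)
    (k : ℕ) (hk : 0 < k)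
    (A : Fin k → (EuclideanSpace ℝ (Fin n) →L[ℝ] EuclideanSpace ℝ (Fin n)))
    (b : Fin k → EuclideanSpace ℝ (Fin n))
    (hdet : ∀ i j : Fin k,
      0 < LinearMap.det (A i).toLinearMap * LinearMap.det (A j).toLinearMap)
    (hsel : ∀ x, ∃ i, F x = A i x + b i)
    (hdeg : ∀ y : EuclideanSpace ℝ (Fin n),
      (∀ x, F x = y → DifferentiableAt ℝ F x ∧ Function.Bijective (fderiv ℝ F x)) →
      ∃! x, F x = y) :
    Function.Bijective F := by
  have hbij : ∀ i, Function.Bijective (A i) := fun i =>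
    bijective_of_det fun h => by simpa [h] using hdet i i
  refine ⟨?_, fun y => ?_⟩
  swap
  · -- A value that is not attained is vacuously regular.
    by_contra! h
    obtain ⟨x, hx, -⟩ := hdeg y fun x hx => (h x hx).elim
    exact h x hx
  obtain ⟨C, hC⟩ : ∃ C : ℝ, ∀ i u, ‖u‖ ≤ C * ‖A i u‖ := by
    have h : ∀ i, ∃ K : NNReal, ∀ u, ‖u‖ ≤ K * ‖A i u‖ := fun i => by
      obtain ⟨K, -, hK⟩ := (A i).toLinearMap.exists_antilipschitzWith
        (LinearMap.ker_eq_bot.2 (hbij i).1)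
      exact ⟨K, fun u => ContinuousLinearMap.bound_of_antilipschitz (A i) hK u⟩
    choose K hK using h
    refine ⟨∑ i, (K i : ℝ), fun i u => (hK i u).trans ?_⟩
    gcongr
    exact Finset.single_le_sum (f := fun i => (K i : ℝ)) (fun i _ => (K i).2) (Finset.mem_univ i)
  -- `P q` is the image of the locus where two pieces with distinct linear parts agree.
  let P : {q : Fin k × Fin k // A q.1 ≠ A q.2} → Set (EuclideanSpace ℝ (Fin n)) := fun q =>
    {y | ∃ z, A q.1.1 z + b q.1.1 = A q.1.2 z + b q.1.2 ∧ y = A q.1.1 z + b q.1.1}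
  have hP : ∀ q, Thin (P q) := fun q => thin_image (hbij _) q.2 _ _
  have hreg : ∀ y, (∀ q, y ∉ P q) → ∃! x, F x = y := by
    intro y hy
    refine hdeg y fun x hx => ?_
    obtain ⟨i, hi⟩ := hsel x
    have huniq : ∀ j, F x = A j x + b j → A j = A i := by
      intro j hj
      by_contra hne
      exact hy ⟨(j, i), hne⟩ ⟨x, hj.symm.trans hi, hx.symm.trans hj⟩
    obtain ⟨ε, hε, hact⟩ := eventually_active hF hsel x
    have hev : F =ᶠ[𝓝 x] fun w => A i (w - x) + F x := by
      filter_upwards [Metric.ball_mem_nhds x hε] with w hw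
      obtain ⟨j, hj, hjw⟩ := hact (w - x) (by simpa [dist_eq_norm] using hw)
      rw [add_sub_cancel, huniq j hj] at hjw
      rw [← hjw, sub_add_cancel]
    have hd : HasFDerivAt F (A i) x := by
      refine HasFDerivAt.congr_of_eventuallyEq ?_ hev
      exact ((A i).hasFDerivAt.comp x ((hasFDerivAt_id x).sub_const x)).add_const (F x)
    exact ⟨hd.differentiableAt, by rw [hd.fderiv]; exact hbij i⟩
  have hdense₁ : Dense {x | ∀ q, F x ∉ P q} := dense_preimage_compl_thin hsel hbij hP
  have hdiag : ∀ x ∈ {x | ∀ q, F x ∉ P q}, ∀ x', ‖x' - x‖ ≤ C * ‖F x' - F x‖ := by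
    intro x hx
    -- The cone with apex `F x` over the image of each agreement locus of codimension at least two.
    let Q : {q : (Fin k × Fin k) × (Fin k × Fin k) // finrank ℝ
        ↥(LinearMap.ker (A q.1.1 - A q.1.2).toLinearMap ⊓
          LinearMap.ker (A q.2.1 - A q.2.2).toLinearMap) + 1 <
        finrank ℝ (EuclideanSpace ℝ (Fin n))} → Set (EuclideanSpace ℝ (Fin n)) := fun q =>
      {w | ∃ (t : ℝ) (z : EuclideanSpace ℝ (Fin n)),
        A q.1.1.1 z + b q.1.1.1 = A q.1.1.2 z + b q.1.1.2 ∧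
        A q.1.2.1 z + b q.1.2.1 = A q.1.2.2 z + b q.1.2.2 ∧
        w = F x + t • (A q.1.1.1 z + b q.1.1.1 - F x)}
    have hQ : ∀ q, Thin (Q q) := fun q => thin_cone _ _ _ _ _ q.2
    have hdense₂ : Dense {x' | ∀ q, F x' ∉ Sum.elim P Q q} :=
      dense_preimage_compl_thin hsel hbij (by rintro (q | q); exacts [hP q, hQ q])
    intro x'
    refine hdense₂.induction (P := fun x' => ‖x' - x‖ ≤ C * ‖F x' - F x‖) ?_
      (isClosed_le (by fun_prop) (by fun_prop)) x'
    intro x' hx'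
    obtain ⟨z, hz, hzx⟩ := norm_sub_le_of_segment hF hsel hdet hC x (F x' - F x) (by
      intro t ht0 ht1 z hz i j l m hij hlm hi hj hl hm
      by_contra! hlt
      -- A bad point strictly inside the segment would put `F x'` on one of the cones `Q`.
      rcases ht0.eq_or_lt with rfl | ht
      · rw [zero_smul, add_zero] at hz
        exact hx ⟨(i, j), hij⟩ ⟨z, hi.symm.trans hj, hz.symm.trans hi⟩
      · refine hx' (Sum.inr ⟨((i, j), (l, m)), hlt⟩)
          ⟨t⁻¹, z, hi.symm.trans hj, hl.symm.trans hm, ?_⟩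
        change F x' = F x + t⁻¹ • (A i z + b i - F x)
        rw [← hi, hz, add_sub_cancel_left, smul_smul, inv_mul_cancel₀ ht.ne', one_smul,
          add_sub_cancel])
    rw [add_sub_cancel] at hz
    obtain rfl : x' = z := (hreg (F x') fun q => hx' (Sum.inl q)).unique rfl hz
    exact hzx
  have hall : ∀ x x', ‖x' - x‖ ≤ C * ‖F x' - F x‖ := by
    intro x x'
    exact hdense₁.induction (P := fun x => ‖x' - x‖ ≤ C * ‖F x' - F x‖)
      (fun x hx => hdiag x hx x') (isClosed_le (by fun_prop) (by fun_prop)) x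
  intro x x' h
  have := hall x' x
  rw [h, sub_self, norm_zero, mul_zero] at this
  exact sub_eq_zero.1 (norm_le_zero_iff.1 this)
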